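/- There exists ε > 0 depending only on d such that the following holds for every prime p. Let μ be a symmetric probability measure on G = F_p^d ⋊ SL_d(F_p) with ‖L₀^θ(μ)‖ ≤ 1/2, and let A ⊆ G be a symmetric set such that μ^{*(l)}(A) ≥ |G|^{−ε} for some integer l ≥ ⌊2^{47} d² log p⌋ (natural logarithm). Then θ(Π₃A) = SL_d(F_p), i.e. every element of SL_d(F_p) is the linear part of some element of the triple product set of A. -/

import Mathlib

open scoped BigOperators Matrix

namespace Paper

abbrev V (p d : ℕ) : Type := Fin d → ZMod p
abbrev SL (p d : ℕ) : Type := Matrix.SpecialLinearGroup (Fin d) (ZMod p)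

/-- The group `F_p^d ⋊ SL_d(F_p)` with multiplication
`(v₁,θ₁)·(v₂,θ₂) = (v₁+θ₁v₂, θ₁θ₂)`. -/
def Aff (p d : ℕ) : Type := V p d × SL p d

namespace Aff

variable {p d : ℕ}

/-- the translation part `v(g)` -/
def vec (g : Aff p d) : V p d := g.1

/-- the linear part `θ(g)` -/
def lin (g : Aff p d) : SL p d := g.2

def mk (v : V p d) (θ : SL p d) : Aff p d := (v, θ)

instance : Mul (Aff p d) :=
  ⟨fun g h => (g.1 + (g.2 : Matrix (Fin d) (Fin d) (ZMod p)) *ᵥ h.1, g.2 * h.2)⟩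

instance : One (Aff p d) := ⟨((0 : V p d), (1 : SL p d))⟩

instance : Inv (Aff p d) :=
  ⟨fun g => (-(((g.2)⁻¹ : SL p d) : Matrix (Fin d) (Fin d) (ZMod p)) *ᵥ g.1, (g.2)⁻¹)⟩

lemma mul_def (g h : Aff p d) :
    g * h = (g.1 + (g.2 : Matrix (Fin d) (Fin d) (ZMod p)) *ᵥ h.1, g.2 * h.2) := rfl

instance : Group (Aff p d) where
  mul_assoc a b c := by
    refine Prod.ext ?_ ?_
    · show (a.1 + (a.2 : Matrix (Fin d) (Fin d) (ZMod p)) *ᵥ b.1) +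
        ((a.2 * b.2 : SL p d) : Matrix (Fin d) (Fin d) (ZMod p)) *ᵥ c.1 =
        a.1 + (a.2 : Matrix (Fin d) (Fin d) (ZMod p)) *ᵥ
          (b.1 + (b.2 : Matrix (Fin d) (Fin d) (ZMod p)) *ᵥ c.1)
      simp [Matrix.mulVec_add, Matrix.mulVec_mulVec, add_assoc]
    · show a.2 * b.2 * c.2 = a.2 * (b.2 * c.2)
      exact mul_assoc _ _ _
  one_mul a := by
    refine Prod.ext ?_ ?_
    · show (0 : V p d) + ((1 : SL p d) : Matrix (Fin d) (Fin d) (ZMod p)) *ᵥ a.1 = a.1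
      simp
    · show (1 : SL p d) * a.2 = a.2
      exact one_mul _
  mul_one a := by
    refine Prod.ext ?_ ?_
    · show a.1 + (a.2 : Matrix (Fin d) (Fin d) (ZMod p)) *ᵥ (0 : V p d) = a.1
      simp
    · show a.2 * 1 = a.2
      exact mul_one _
  inv_mul_cancel a := by
    refine Prod.ext ?_ ?_
    · show -(((a.2)⁻¹ : SL p d) : Matrix (Fin d) (Fin d) (ZMod p)) *ᵥ a.1 +
        (((a.2)⁻¹ : SL p d) : Matrix (Fin d) (Fin d) (ZMod p)) *ᵥ a.1 = (0 : V p d)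
      rw [Matrix.neg_mulVec]
      exact neg_add_cancel _
    · show (a.2)⁻¹ * a.2 = 1
      exact inv_mul_cancel _

instance : DecidableEq (SL p d) :=
  inferInstanceAs (DecidableEq {A : Matrix (Fin d) (Fin d) (ZMod p) // A.det = 1})

instance : DecidableEq (Aff p d) := inferInstanceAs (DecidableEq (V p d × SL p d))

instance [NeZero p] : Fintype (Aff p d) := inferInstanceAs (Fintype (V p d × SL p d))

/-- the action of `Aff p d` on `F_p^d`: `g.x = v(g) + θ(g) x`. -/
def aact (g : Aff p d) (x : V p d) : V p d :=
  g.vec + (g.lin : Matrix (Fin d) (Fin d) (ZMod p)) *ᵥ x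

end Aff

/-- Dirac measure at a point -/
def dirac {β : Type*} [DecidableEq β] (x : β) : β → ℝ := fun y => if y = x then 1 else 0

/-- probability measure (density w.r.t. counting measure) on a finite set -/
def IsProb {β : Type*} [Fintype β] (μ : β → ℝ) : Prop :=
  (∀ x, 0 ≤ μ x) ∧ ∑ x, μ x = 1

/-- convolution of measures on a finite group -/
def conv {H : Type*} [Group H] [Fintype H] (μ ν : H → ℝ) : H → ℝ :=
  fun g => ∑ h, μ h * ν (h⁻¹ * g)

/-- `l`-fold convolution `μ^{*(l)}` -/
def itconv {H : Type*} [Group H] [Fintype H] [DecidableEq H] (μ : H → ℝ) : ℕ → H → ℝ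
  | 0 => dirac 1
  | n + 1 => conv (itconv μ n) μ

/-- `μ̌(g) = μ(g⁻¹)` -/
def check {H : Type*} [Group H] (μ : H → ℝ) : H → ℝ := fun g => μ g⁻¹

/-- the uniform probability measure on a finite subset -/
noncomputable def unif {H : Type*} [DecidableEq H] (S : Finset H) : H → ℝ :=
  fun g => if g ∈ S then ((S.card : ℝ))⁻¹ else 0

/-- `L²` norm (counting measure) of a complex-valued function on a finite set -/
noncomputable def cnorm2 {β : Type*} [Fintype β] (f : β → ℂ) : ℝ :=
  Real.sqrt (∑ x, ‖f x‖ ^ 2)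

/-- the averaging operator `L(μ)` on `ℂ[H]` -/
noncomputable def avgOp {H : Type*} [Group H] [Fintype H] (μ : H → ℝ) (f : H → ℂ) : H → ℂ :=
  fun g => ∑ s, (μ s : ℂ) * f (s⁻¹ * g)

/-- `‖L₀(μ)‖`: the operator norm, w.r.t. the `L²` norm for counting measure, of the
averaging operator `L(μ)` restricted to the functions with zero sum -/
noncomputable def L0norm {H : Type*} [Group H] [Fintype H] (μ : H → ℝ) : ℝ :=
  sSup {r : ℝ | ∃ f : H → ℂ, (∑ g, f g) = 0 ∧ cnorm2 f ≤ 1 ∧ r = cnorm2 (avgOp μ f)}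

/-- `L²` norm (counting measure) of a real-valued function on a finite set -/
noncomputable def norm2V {β : Type*} [Fintype β] (η : β → ℝ) : ℝ :=
  Real.sqrt (∑ x, (η x) ^ 2)

variable {p d : ℕ}

/-- the convolution `μ.ν` of a measure on `Aff p d` with a measure on `F_p^d`:
`(μ.ν)(x) = ∑_g μ(g)·ν(g⁻¹.x)` -/
def actConv [NeZero p] (μ : Aff p d → ℝ) (ν : V p d → ℝ) : V p d → ℝ :=
  fun x => ∑ g : Aff p d, μ g * ν (Aff.aact g⁻¹ x)

/-- pushforward of a measure on `Aff p d` under the projection `θ` to the linear part -/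
def push [NeZero p] (μ : Aff p d → ℝ) : SL p d → ℝ :=
  fun σ => ∑ g : Aff p d, if Aff.lin g = σ then μ g else 0

/-- `‖L₀^θ(μ)‖` -/
noncomputable def L0theta [NeZero p] (μ : Aff p d → ℝ) : ℝ := L0norm (push μ)

/-- the pairing `⟨x,ξ⟩` in `F_p` -/
def ip (x ξ : V p d) : ZMod p := ∑ i, x i * ξ i

/-- `e(t) = e^{-2πit/p}` -/
noncomputable def ee (p : ℕ) (t : ZMod p) : ℂ :=
  Complex.exp (-(2 * Real.pi * Complex.I) * (t.val : ℂ) / (p : ℂ))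

/-- the Fourier transform on `F_p^d` -/
noncomputable def fourier [NeZero p] (f : V p d → ℂ) (ξ : V p d) : ℂ :=
  ∑ x, ee p (ip x ξ) * f x

/-- the normalized `L̂⁴` norm on the Fourier side -/
noncomputable def hatNorm4 [NeZero p] (φ : V p d → ℂ) : ℝ :=
  (((p : ℝ) ^ d)⁻¹ * ∑ ξ, ‖φ ξ‖ ^ 4) ^ ((1 : ℝ) / 4)

/-! The group `SL_d(F_p)` is quasirandom in the sense of Gowers: a transvection `u` is conjugate
to `u ^ m ^ 2` for every `m` prime to `p`, so if a representation does not kill `u`, then `u` acts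
with a primitive `p`-th root of unity `ζ` as an eigenvalue and hence with all the `(p - 1) / 2`
eigenvalues `ζ ^ m ^ 2`. The functions at which `L₀(ν)` attains its norm form a representation
under right translations, so their space has dimension at least `(p - 1) / 2`, and the
Hilbert–Schmidt norm of `L(ν)` controls `‖L₀(ν)‖`. Taking for `ν` the uniform measure on a set
gives Gowers' theorem that the product of three dense subsets is the whole group.

The spectral gap brings `θ_* μ^{*(l)}` within `2^{-l}` of the uniform measure, so the mass
`|G|^{-ε}` of `A` forces `θ(A)` to be dense. With `ε = 1 / (16 d²)` the bound `|G| ≤ p^(2d²)` makes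
`|G|^{-ε}` at least `p^{-1/8}`. Either it exceeds `5 / 8`, and `θ(A)` fills more than half of the
group, or `p > 42`, which is large enough for Gowers' theorem.
-/

section SpecialLinearGroup

open Matrix
open Matrix.SpecialLinearGroup (transvection diag2n diag2n_coe transvection_coe)

variable {n F : Type*} [Fintype n] [DecidableEq n] [Field F] {i j : n}

theorem transvection_mulVec (hij : i ≠ j) (c : F) (v : n → F) :
    (transvection hij c : Matrix n n F) *ᵥ v = Function.update v i (v i + c * v j) := by
  ext m
  by_cases h : m = i <;> simp [transvection_coe, add_mulVec, single_mulVec, h]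

theorem diag2n_mulVec (hij : i ≠ j) {a : F} (ha : a ≠ 0) (v : n → F) :
    (diag2n hij a ha : Matrix n n F) *ᵥ v =
      Function.update (Function.update v j (a⁻¹ * v j)) i (a * v i) := by
  ext m
  rcases eq_or_ne m i with rfl | hi
  · simp [diag2n_coe, mulVec_diagonal]
  rcases eq_or_ne m j with rfl | hj
  · simp [diag2n_coe, mulVec_diagonal, hi]
  · simp [diag2n_coe, mulVec_diagonal, hi, hj]

theorem diag2n_eq_mul_transvection (hij : i ≠ j) {a : F} (ha : a ≠ 0) :
    diag2n hij a ha =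
      transvection hij a * transvection hij.symm (-a⁻¹) * transvection hij (a - 1) *
        transvection hij.symm 1 * transvection hij (-1) := by
  refine SpecialLinearGroup.toLin'_injective (LinearEquiv.ext fun v => ?_)
  simp only [map_mul, LinearEquiv.mul_apply, SpecialLinearGroup.toLin'_apply, toLin'_apply,
    diag2n_mulVec, transvection_mulVec]
  ext k
  rcases eq_or_ne k i with rfl | hi
  · simp [hij, hij.symm]
    field_simp
    ring
  rcases eq_or_ne k j with rfl | hj
  · simp [hi, hij]
    field_simp
    ring
  · simp [hi, hj]

theorem diag2n_mul_transvection (hij : i ≠ j) {a : F} (ha : a ≠ 0) (c : F) :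
    diag2n hij a ha * transvection hij c = transvection hij (a ^ 2 * c) * diag2n hij a ha := by
  refine SpecialLinearGroup.toLin'_injective (LinearEquiv.ext fun v => ?_)
  simp only [map_mul, LinearEquiv.mul_apply, SpecialLinearGroup.toLin'_apply, toLin'_apply,
    diag2n_mulVec, transvection_mulVec]
  ext k
  rcases eq_or_ne k i with rfl | hi
  · simp [hij.symm]
    field_simp
  · simp [hi, Function.update_apply, hij.symm]

theorem transvection_pow (hij : i ≠ j) (c : F) (k : ℕ) :
    transvection hij c ^ k = transvection hij (k * c) := by
  induction k with
  | zero => simp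
  | succ k ih =>
    rw [pow_succ, ih, ← SpecialLinearGroup.transvection_add, Nat.cast_succ, add_one_mul]

theorem closure_range_toSpecialLinearGroup :
    Subgroup.closure
      (Set.range (TransvectionStruct.toSpecialLinearGroup (ι := n) (F := F))) = ⊤ := by
  set N := Subgroup.closure (Set.range (TransvectionStruct.toSpecialLinearGroup (ι := n) (F := F)))
  have transvection_mem {i j : n} (hij : i ≠ j) (c : F) : transvection hij c ∈ N :=
    Subgroup.subset_closure ⟨⟨i, j, hij, c⟩, rfl⟩
  rcases subsingleton_or_nontrivial n with _ | _
  · exact Subsingleton.elim _ _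
  refine (Subgroup.eq_top_iff' N).2 fun g =>
    SpecialLinearGroup.diagonal_transvection_induction' (fun h => h ∈ N) g
      (fun i j hij a ha => ?_) (fun _ _ => transvection_mem) fun _ _ => N.mul_mem
  rw [diag2n_eq_mul_transvection]
  exact N.mul_mem (N.mul_mem (N.mul_mem (N.mul_mem (transvection_mem _ _) (transvection_mem _ _))
    (transvection_mem _ _)) (transvection_mem _ _)) (transvection_mem _ _)

end SpecialLinearGroup

section Representation

open Module Polynomial

variable {K E : Type*} [Field K] [AddCommGroup E] [Module K E]

theorem exists_hasEigenvalue_isPrimitiveRoot [IsAlgClosed K] [FiniteDimensional K E] {p : ℕ}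
    [Fact p.Prime] (hpK : (p : K) ≠ 0) {T : End K E} (hT : T ^ p = 1) (hT1 : T ≠ 1) :
    ∃ ζ : K, IsPrimitiveRoot ζ p ∧ T.HasEigenvalue ζ := by
  have hsemisimple : T.IsFinitelySemisimple :=
    (End.isSemisimple_of_squarefree_aeval_eq_zero
      (X_pow_sub_one_separable_iff.2 hpK).squarefree (by simp [hT])).isFinitelySemisimple
  have hspan : ⨆ ζ, T.eigenspace ζ = ⊤ := by
    simpa only [hsemisimple.maxGenEigenspace_eq_eigenspace] using
      T.iSup_maxGenEigenspace_eq_top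
  obtain ⟨ζ, hζ1, hζ⟩ : ∃ ζ ≠ 1, T.HasEigenvalue ζ := by
    by_contra! hone
    have htop : T.eigenspace 1 = ⊤ := by
      refine eq_top_iff.2 (hspan ▸ iSup_le fun ζ => ?_)
      rcases eq_or_ne ζ 1 with rfl | hζ1
      · exact le_rfl
      · rw [not_not.1 fun h => hone ζ hζ1 (End.hasEigenvalue_iff.2 h)]
        exact bot_le
    exact hT1 (LinearMap.ext fun x => by
      simpa using End.mem_eigenspace_iff.1 (htop ▸ Submodule.mem_top : x ∈ T.eigenspace 1))
  obtain ⟨w, hw⟩ := hζ.exists_hasEigenvector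
  have hζp : ζ ^ p = 1 := by
    have h := hw.pow_apply p
    rw [hT, End.one_apply] at h
    exact (smul_left_injective K hw.2 (by simpa using h)).symm
  exact ⟨ζ, IsPrimitiveRoot.iff_orderOf.2 (orderOf_eq_prime hζp hζ1), hζ⟩

theorem hasEigenvalue_pow_of_mul_eq_pow_mul {G : Type*} [Group G] (ρ : G →* End K E) {g u : G}
    {m : ℕ} (hconj : g * u = u ^ m * g) {ζ : K} (hζ : (ρ u).HasEigenvalue ζ) :
    (ρ u).HasEigenvalue (ζ ^ m) := by
  obtain ⟨w, hw⟩ := hζ.exists_hasEigenvector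
  have hconj' : u * g⁻¹ = g⁻¹ * u ^ m := by
    rw [eq_inv_mul_iff_mul_eq, ← mul_assoc, hconj, mul_inv_cancel_right]
  refine End.hasEigenvalue_of_hasEigenvector (x := ρ g⁻¹ w)
    ⟨End.mem_eigenspace_iff.2 ?_, fun h0 => hw.2 ?_⟩
  · rw [← End.mul_apply, ← map_mul, hconj', map_mul, End.mul_apply, map_pow, hw.pow_apply,
      map_smul]
  · simpa [← End.mul_apply, ← map_mul] using congrArg (ρ g) h0

theorem injective_pow_succ_sq {p : ℕ} [Fact p.Prime] {ζ : K} (hζ : IsPrimitiveRoot ζ p) :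
    Function.Injective fun k : Fin ((p - 1) / 2) => ζ ^ (k.1 + 1) ^ 2 := by
  rintro ⟨k, hk⟩ ⟨l, hl⟩ hkl
  have hmod := (hζ.isOfFinOrder (Nat.Prime.ne_zero Fact.out)).pow_eq_pow_iff_modEq.1 hkl
  rw [← hζ.eq_orderOf, ← ZMod.natCast_eq_natCast_iff, Nat.cast_pow, Nat.cast_pow,
    sq_eq_sq_iff_eq_or_eq_neg] at hmod
  rcases hmod with heq | hneg
  · have := Nat.ModEq.eq_of_lt_of_lt ((ZMod.natCast_eq_natCast_iff _ _ _).1 heq) (by lia) (by lia)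
    exact Fin.ext (by lia)
  · rw [eq_neg_iff_add_eq_zero, ← Nat.cast_add, ZMod.natCast_eq_zero_iff] at hneg
    have := Nat.le_of_dvd (by lia) hneg
    lia

theorem card_le_finrank_of_injective_eigenvalues [FiniteDimensional K E] {ι : Type*} [Fintype ι]
    {T : End K E} {c : ι → K} (hc : Function.Injective c) (heig : ∀ i, T.HasEigenvalue (c i)) :
    Fintype.card ι ≤ finrank K E := by
  choose w hw using fun i => (heig i).exists_hasEigenvector
  exact (End.eigenvectors_linearIndependent' T c hc w hw).fintype_card_le_finrank

theorem le_finrank_of_ne_one [IsAlgClosed K] [FiniteDimensional K E] {n : Type*} [Fintype n]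
    [DecidableEq n] {p : ℕ} [Fact p.Prime] (hpK : (p : K) ≠ 0)
    {ρ : Matrix.SpecialLinearGroup n (ZMod p) →* End K E} (hρ : ρ ≠ 1) :
    (p - 1) / 2 ≤ finrank K E := by
  obtain ⟨i, j, hij, c, hρu⟩ : ∃ (i j : n) (hij : i ≠ j) (c : ZMod p),
      ρ (Matrix.SpecialLinearGroup.transvection hij c) ≠ 1 := by
    by_contra! htriv
    refine hρ (MonoidHom.eq_of_eqOn_dense closure_range_toSpecialLinearGroup ?_)
    rintro _ ⟨t, rfl⟩
    exact htriv t.i t.j t.hij t.c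
  set u := Matrix.SpecialLinearGroup.transvection hij c
  have hup : u ^ p = 1 := by simp [u, transvection_pow]
  obtain ⟨ζ, hζ, heig⟩ := exists_hasEigenvalue_isPrimitiveRoot hpK
    (T := ρ u) (by rw [← map_pow, hup, map_one]) hρu
  have hsquare (k : Fin ((p - 1) / 2)) : (ρ u).HasEigenvalue (ζ ^ (k.1 + 1) ^ 2) := by
    have hk : ((k.1 + 1 : ℕ) : ZMod p) ≠ 0 := by
      rw [Ne, ZMod.natCast_eq_zero_iff]
      exact fun h => by have := Nat.le_of_dvd k.1.succ_pos h; lia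
    refine hasEigenvalue_pow_of_mul_eq_pow_mul ρ
      (g := Matrix.SpecialLinearGroup.diag2n hij _ hk) ?_ heig
    rw [diag2n_mul_transvection, transvection_pow, Nat.cast_pow]
  simpa using card_le_finrank_of_injective_eigenvalues (injective_pow_succ_sq hζ) hsquare

end Representation

section NormAttaining

open scoped InnerProductSpace InnerProduct

variable {𝕜 E F : Type*} [RCLike 𝕜] [NormedAddCommGroup E] [InnerProductSpace 𝕜 E]
  [NormedAddCommGroup F] [InnerProductSpace 𝕜 F]

theorem exists_norm_eq_one_norm_apply_eq [FiniteDimensional 𝕜 E] [Nontrivial E] (T : E →L[𝕜] F) :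
    ∃ f, ‖f‖ = 1 ∧ ‖T f‖ = ‖T‖ := by
  have : ProperSpace E := FiniteDimensional.proper 𝕜 E
  have : NormedSpace ℝ E := NormedSpace.restrictScalars ℝ 𝕜 E
  obtain ⟨f, hf, hmax⟩ := (isCompact_sphere (0 : E) 1).exists_isMaxOn
    (NormedSpace.sphere_nonempty.2 zero_le_one) T.continuous.norm.continuousOn
  rw [mem_sphere_zero_iff_norm] at hf
  refine ⟨f, hf, le_antisymm (T.unit_le_opNorm f hf.le) ?_⟩
  exact T.opNorm_le_of_unit_norm (norm_nonneg _) fun x hx => hmax (mem_sphere_zero_iff_norm.2 hx)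

theorem adjoint_apply_eq_iff_norm_apply_eq [CompleteSpace E] [CompleteSpace F] (T : E →L[𝕜] F)
    (f : E) : (T†) (T f) = ((‖T‖ ^ 2 : ℝ) : 𝕜) • f ↔ ‖T f‖ = ‖T‖ * ‖f‖ := by
  have hinner : RCLike.re ⟪(T†) (T f), f⟫_𝕜 = ‖T f‖ ^ 2 :=
    (T.apply_norm_sq_eq_inner_adjoint_left f).symm
  constructor
  · intro h
    rw [h, inner_smul_left, RCLike.conj_ofReal, RCLike.re_ofReal_mul,
      inner_self_eq_norm_sq] at hinner
    exact (sq_eq_sq₀ (by positivity) (by positivity)).1 (by rw [← hinner, mul_pow])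
  · intro h
    have hle : ‖(T†) (T f)‖ ≤ ‖T‖ ^ 2 * ‖f‖ := by
      calc ‖(T†) (T f)‖ ≤ ‖T†‖ * ‖T f‖ := (T†).le_opNorm _
        _ = ‖T‖ ^ 2 * ‖f‖ := by rw [LinearIsometryEquiv.norm_map, h]; ring
    have hdist : ‖(T†) (T f) - ((‖T‖ ^ 2 : ℝ) : 𝕜) • f‖ ^ 2 ≤ 0 := by
      rw [@norm_sub_sq 𝕜, inner_smul_right, RCLike.re_ofReal_mul, hinner, norm_smul,
        RCLike.norm_ofReal, abs_of_nonneg (by positivity), h]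
      nlinarith [norm_nonneg ((T†) (T f)), sq_nonneg (‖T‖ * ‖f‖)]
    rw [← sub_eq_zero, ← norm_eq_zero]
    exact pow_eq_zero_iff two_ne_zero |>.1 (le_antisymm hdist (sq_nonneg _))

end NormAttaining

section Quasirandom

open Module

/-- Gowers' notion of a `D`-quasirandom group: all its nontrivial finite-dimensional complex
representations have dimension at least `D`. Only the coordinate spaces `ℂⁿ` are quantified over,
which keeps the definition free of universe levels. -/
def IsQuasirandom (H : Type*) [Group H] (D : ℕ) : Prop :=
  ∀ (n : ℕ) (ρ : H →* End ℂ (Fin n → ℂ)), ρ ≠ 1 → D ≤ n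

theorem isQuasirandom_specialLinearGroup (n : Type*) [Fintype n] [DecidableEq n] (p : ℕ)
    [Fact p.Prime] :
    IsQuasirandom (Matrix.SpecialLinearGroup n (ZMod p)) ((p - 1) / 2) := fun m ρ hρ => by
  simpa using le_finrank_of_ne_one (Nat.cast_ne_zero.2 (Nat.Prime.ne_zero Fact.out)) hρ

variable {H : Type*} [Group H] {D : ℕ}

theorem IsQuasirandom.le_finrank (hH : IsQuasirandom H D) {E : Type*} [AddCommGroup E]
    [Module ℂ E] [FiniteDimensional ℂ E] {ρ : H →* End ℂ E} (hρ : ρ ≠ 1) : D ≤ finrank ℂ E := by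
  let e := (finBasis ℂ E).equivFun.conjRingEquiv
  refine hH _ (e.toMonoidHom.comp ρ) fun htriv => hρ (MonoidHom.ext fun h => e.injective ?_)
  simpa using DFunLike.congr_fun htriv h

/-- The vectors at which `T` attains its norm form an eigenspace of `T†T`; this eigenspace is a
nontrivial representation of `H`, hence of large dimension. -/
theorem IsQuasirandom.exists_orthonormal_norm_apply_eq (hH : IsQuasirandom H D) {E F : Type*}
    [NormedAddCommGroup E] [InnerProductSpace ℂ E] [FiniteDimensional ℂ E] [Nontrivial E]
    [NormedAddCommGroup F] [InnerProductSpace ℂ F] [CompleteSpace F] {ρ : H →* End ℂ E}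
    (hfixed : ∀ f, (∀ h, ρ h f = f) → f = 0) (hρ : ∀ h f, ‖ρ h f‖ = ‖f‖) {T : E →L[ℂ] F}
    (hT : ∀ h f, ‖T (ρ h f)‖ = ‖T f‖) :
    ∃ v : Fin D → E, Orthonormal ℂ v ∧ ∀ i, ‖T (v i)‖ = ‖T‖ := by
  have := FiniteDimensional.complete ℂ E
  let W : Submodule ℂ E :=
    End.eigenspace (ContinuousLinearMap.adjoint T ∘L T).toLinearMap ((‖T‖ ^ 2 : ℝ) : ℂ)
  have mem_W (f : E) : f ∈ W ↔ ‖T f‖ = ‖T‖ * ‖f‖ :=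
    End.mem_eigenspace_iff.trans (adjoint_apply_eq_iff_norm_apply_eq T f)
  have hinv (h : H) : ∀ f ∈ W, ρ h f ∈ W := fun f hf => by
    rw [mem_W] at hf ⊢
    rw [hT, hρ, hf]
  let σ : H →* End ℂ W :=
    { toFun h := (ρ h).restrict (hinv h)
      map_one' := by ext; simp
      map_mul' g h := by ext; simp }
  have hσ : σ ≠ 1 := fun htriv => by
    obtain ⟨f, hf1, hf⟩ := exists_norm_eq_one_norm_apply_eq T
    have hfW : f ∈ W := (mem_W f).2 (by rw [hf, hf1, mul_one])
    have hf0 := hfixed f fun h =>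
      congrArg Subtype.val (LinearMap.congr_fun (DFunLike.congr_fun htriv h) ⟨f, hfW⟩)
    simp [hf0] at hf1
  let b := stdOrthonormalBasis ℂ W
  let ι : Fin D ↪ Fin (finrank ℂ W) := Fin.castLEEmb (hH.le_finrank hσ)
  have hv : Orthonormal ℂ fun i => (b (ι i) : E) :=
    (b.orthonormal.comp ι ι.injective).comp_linearIsometry W.subtypeₗᵢ
  exact ⟨_, hv, fun i => by rw [(mem_W _).1 (b (ι i)).2, hv.1 i, mul_one]⟩

end Quasirandom

section Averaging

theorem cnorm2_eq_norm {β : Type*} [Fintype β] (f : β → ℂ) :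
    cnorm2 f = ‖(WithLp.toLp 2 f : EuclideanSpace ℂ β)‖ :=
  (EuclideanSpace.norm_eq _).symm

theorem norm_eq_cnorm2 {β : Type*} [Fintype β] (f : EuclideanSpace ℂ β) : ‖f‖ = cnorm2 f :=
  (cnorm2_eq_norm _).symm

theorem cnorm2_comp_equiv {β γ : Type*} [Fintype β] [Fintype γ] (f : γ → ℂ) (e : β ≃ γ) :
    cnorm2 (f ∘ e) = cnorm2 f :=
  congrArg Real.sqrt (e.sum_comp fun x => ‖f x‖ ^ 2)

/-- The functions with zero sum: the domain of the operator whose norm is `L0norm`. -/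
noncomputable def zeroSum (β : Type*) [Fintype β] : Submodule ℂ (EuclideanSpace ℂ β) :=
  LinearMap.ker (∑ x, EuclideanSpace.proj x : EuclideanSpace ℂ β →L[ℂ] ℂ).toLinearMap

theorem mem_zeroSum {β : Type*} [Fintype β] {f : EuclideanSpace ℂ β} :
    f ∈ zeroSum β ↔ ∑ x, f x = 0 := by
  simp [zeroSum]

variable {H : Type*} [Group H] [Fintype H]

/-- The averaging operator `L(μ)` restricted to the functions with zero sum. -/
noncomputable def avgOpZeroSum (μ : H → ℝ) : zeroSum H →L[ℂ] EuclideanSpace ℂ H :=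
  LinearMap.toContinuousLinearMap
    { toFun f := WithLp.toLp 2 (avgOp μ f.1)
      map_add' f g := by ext x; simp [avgOp, mul_add, Finset.sum_add_distrib]
      map_smul' c f := by ext x; simp [avgOp, Finset.mul_sum, mul_left_comm] }

theorem norm_avgOpZeroSum_apply (μ : H → ℝ) (f : zeroSum H) :
    ‖avgOpZeroSum μ f‖ = cnorm2 (avgOp μ f.1) :=
  norm_eq_cnorm2 _

theorem norm_avgOpZeroSum (μ : H → ℝ) : ‖avgOpZeroSum μ‖ = L0norm μ := by
  rw [← ContinuousLinearMap.sSup_unitClosedBall_eq_norm, L0norm]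
  congr 1
  ext r
  constructor
  · rintro ⟨f, hf, rfl⟩
    refine ⟨f.1, mem_zeroSum.1 f.2, ?_, norm_avgOpZeroSum_apply μ f⟩
    rw [← norm_eq_cnorm2]
    simpa using hf
  · rintro ⟨f, hf, hf1, rfl⟩
    refine ⟨⟨WithLp.toLp 2 f, mem_zeroSum.2 hf⟩, ?_, norm_avgOpZeroSum_apply μ _⟩
    simpa [← cnorm2_eq_norm] using hf1

theorem L0norm_nonneg (μ : H → ℝ) : 0 ≤ L0norm μ :=
  norm_avgOpZeroSum μ ▸ ContinuousLinearMap.opNorm_nonneg _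

theorem cnorm2_avgOp_le (μ : H → ℝ) {f : H → ℂ} (hf : ∑ x, f x = 0) :
    cnorm2 (avgOp μ f) ≤ L0norm μ * cnorm2 f := by
  rw [cnorm2_eq_norm f, ← norm_avgOpZeroSum]
  exact (norm_avgOpZeroSum_apply μ ⟨WithLp.toLp 2 f, mem_zeroSum.2 hf⟩).symm.trans_le
    (ContinuousLinearMap.le_opNorm _ _)

/-- The right regular representation of `H` on the functions with zero sum. It commutes with the
averaging operators, which act by left translations. -/
noncomputable def rightTranslation (H : Type*) [Group H] [Fintype H] :
    H →* Module.End ℂ (zeroSum H) where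
  toFun g :=
    { toFun f := ⟨WithLp.toLp 2 (f.1 ∘ Equiv.mulRight g),
        mem_zeroSum.2 ((Equiv.sum_comp (Equiv.mulRight g) _).trans (mem_zeroSum.1 f.2))⟩
      map_add' _ _ := rfl
      map_smul' _ _ := rfl }
  map_one' := by ext f x; simp
  map_mul' g h := by ext f x; simp [mul_assoc]

theorem norm_rightTranslation (g : H) (f : zeroSum H) : ‖rightTranslation H g f‖ = ‖f‖ :=
  (norm_eq_cnorm2 _).trans ((cnorm2_comp_equiv _ _).trans (norm_eq_cnorm2 _).symm)

theorem norm_avgOpZeroSum_rightTranslation (μ : H → ℝ) (g : H) (f : zeroSum H) :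
    ‖avgOpZeroSum μ (rightTranslation H g f)‖ = ‖avgOpZeroSum μ f‖ := by
  have hcomm : avgOp μ (f.1 ∘ Equiv.mulRight g) = avgOp μ f.1 ∘ Equiv.mulRight g := by
    ext x
    simp [avgOp, mul_assoc]
  calc ‖avgOpZeroSum μ (rightTranslation H g f)‖ = cnorm2 (avgOp μ f.1 ∘ Equiv.mulRight g) :=
        (norm_avgOpZeroSum_apply μ _).trans (congrArg cnorm2 hcomm)
    _ = ‖avgOpZeroSum μ f‖ := (cnorm2_comp_equiv _ _).trans (norm_avgOpZeroSum_apply μ f).symm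

theorem eq_zero_of_rightTranslation_eq {f : zeroSum H} (hf : ∀ g, rightTranslation H g f = f) :
    f = 0 := by
  have hconst (x : H) : f.1 x = f.1 1 := by
    simpa [rightTranslation] using congrArg (fun u : zeroSum H => u.1 1) (hf x)
  have hsum := mem_zeroSum.1 f.2
  simp only [hconst, Finset.sum_const, Finset.card_univ, nsmul_eq_mul, mul_eq_zero,
    Nat.cast_eq_zero, Fintype.card_ne_zero, false_or] at hsum
  ext x
  rw [hconst, hsum]
  rfl

/-- The right-hand side is the squared Hilbert–Schmidt norm of `L(μ)`. -/
theorem sum_sq_cnorm2_avgOp_le (μ : H → ℝ) {ι : Type*} [Fintype ι] {v : ι → EuclideanSpace ℂ H}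
    (hv : Orthonormal ℂ v) :
    ∑ i, cnorm2 (avgOp μ (v i)) ^ 2 ≤ Fintype.card H * ∑ x, μ x ^ 2 := by
  let row (x : H) : EuclideanSpace ℂ H := WithLp.toLp 2 fun y => (μ (x * y⁻¹) : ℂ)
  let inv_mul (x : H) : H ≃ H := (Equiv.inv H).trans (Equiv.mulRight x)
  have avgOp_eq_inner (f : EuclideanSpace ℂ H) (x : H) :
      avgOp μ f x = inner ℂ (row x) f := by
    rw [avgOp, PiLp.inner_apply]
    exact Fintype.sum_equiv (inv_mul x) _ _ fun s => by simp [row, inv_mul, mul_comm]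
  have norm_sq_row (x : H) : ‖row x‖ ^ 2 = ∑ y, μ y ^ 2 := by
    rw [EuclideanSpace.norm_sq_eq]
    exact (Fintype.sum_equiv (inv_mul x) _ _ fun s => by simp [row, inv_mul]).symm
  have sq_cnorm2 (f : H → ℂ) : cnorm2 f ^ 2 = ∑ x, ‖f x‖ ^ 2 :=
    Real.sq_sqrt (Finset.sum_nonneg fun _ _ => sq_nonneg _)
  calc ∑ i, cnorm2 (avgOp μ (v i)) ^ 2
      = ∑ x, ∑ i, ‖inner ℂ (v i) (row x)‖ ^ 2 := by
        simp only [sq_cnorm2, avgOp_eq_inner, norm_inner_symm (row _)]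
        exact Finset.sum_comm
    _ ≤ ∑ x, ‖row x‖ ^ 2 := Finset.sum_le_sum fun x _ => hv.sum_inner_products_le (row x)
    _ = Fintype.card H * ∑ x, μ x ^ 2 := by simp [norm_sq_row]

theorem IsQuasirandom.mul_sq_L0norm_le {D : ℕ} (hH : IsQuasirandom H D) (μ : H → ℝ) :
    D * L0norm μ ^ 2 ≤ Fintype.card H * ∑ x, μ x ^ 2 := by
  rw [← norm_avgOpZeroSum]
  rcases subsingleton_or_nontrivial (zeroSum H) with _ | _
  · rw [Subsingleton.elim (avgOpZeroSum μ) 0, ContinuousLinearMap.opNorm_zero]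
    simp only [ne_eq, OfNat.ofNat_ne_zero, not_false_eq_true, zero_pow, mul_zero]
    positivity
  -- Without `convert`, unifying the two structures that `zeroSum H` carries times out.
  obtain ⟨v, hv, hnorm⟩ := hH.exists_orthonormal_norm_apply_eq
    (E := zeroSum H) (F := EuclideanSpace ℂ H) (ρ := rightTranslation H)
    (T := avgOpZeroSum μ) (fun _ => eq_zero_of_rightTranslation_eq)
    (fun g f => by convert norm_rightTranslation g f)
    (fun g f => by convert norm_avgOpZeroSum_rightTranslation μ g f)
  calc D * ‖avgOpZeroSum μ‖ ^ 2 = ∑ i, cnorm2 (avgOp μ (v i).1) ^ 2 := by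
        simp only [← norm_avgOpZeroSum_apply, hnorm, Finset.sum_const, Finset.card_univ,
          Fintype.card_fin, nsmul_eq_mul]
    _ ≤ Fintype.card H * ∑ x, μ x ^ 2 :=
        sum_sq_cnorm2_avgOp_le μ (hv.comp_linearIsometry (zeroSum H).subtypeₗᵢ)

end Averaging

section Convolution

variable {H : Type*} [Group H] [Fintype H]

theorem conv_assoc (μ ν η : H → ℝ) : conv (conv μ ν) η = conv μ (conv ν η) := by
  funext g
  simp only [conv, Finset.sum_mul, Finset.mul_sum]
  rw [Finset.sum_comm]
  refine Finset.sum_congr rfl fun h _ => ?_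
  exact Fintype.sum_equiv (Equiv.mulLeft h⁻¹) _ _ fun k => by simp [mul_assoc]

theorem sum_conv (μ ν : H → ℝ) : ∑ x, conv μ ν x = (∑ x, μ x) * ∑ x, ν x := by
  simp only [conv, Finset.sum_mul]
  rw [Finset.sum_comm]
  refine Finset.sum_congr rfl fun h _ => ?_
  rw [← Finset.mul_sum, ← Equiv.sum_comp (Equiv.mulLeft h⁻¹) ν]
  rfl

variable [DecidableEq H]

theorem conv_dirac (μ : H → ℝ) : conv μ (dirac 1) = μ := by
  funext g
  simp [conv, dirac, inv_mul_eq_one]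

theorem dirac_conv (μ : H → ℝ) : conv (dirac 1) μ = μ := by
  funext g
  simp [conv, dirac]

theorem itconv_succ' (μ : H → ℝ) (l : ℕ) : itconv μ (l + 1) = conv μ (itconv μ l) := by
  induction l with
  | zero => exact (dirac_conv μ).trans (conv_dirac μ).symm
  | succ l ih => exact (congrArg (conv · μ) ih).trans (conv_assoc _ _ _)

theorem sum_itconv {μ : H → ℝ} (hμ : ∑ x, μ x = 1) (l : ℕ) : ∑ x, itconv μ l x = 1 := by
  induction l with
  | zero => simp [itconv, dirac]
  | succ l ih => rw [itconv, sum_conv, ih, hμ, mul_one]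

theorem itconv_nonneg {μ : H → ℝ} (hμ : ∀ x, 0 ≤ μ x) (l : ℕ) (x : H) : 0 ≤ itconv μ l x := by
  induction l generalizing x with
  | zero => exact ite_nonneg zero_le_one le_rfl
  | succ l ih => exact Finset.sum_nonneg fun h _ => mul_nonneg (ih h) (hμ _)

end Convolution

section Discrepancy

theorem norm2V_eq_cnorm2 {β : Type*} [Fintype β] (η : β → ℝ) :
    norm2V η = cnorm2 fun x => (η x : ℂ) := by
  simp [norm2V, cnorm2]

/-- The `L²` distance of `ν` from the uniform probability measure. -/
noncomputable def discrepancy {β : Type*} [Fintype β] (ν : β → ℝ) : ℝ :=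
  norm2V fun x => ν x - (Fintype.card β : ℝ)⁻¹

theorem sq_discrepancy {β : Type*} [Fintype β] (ν : β → ℝ) :
    discrepancy ν ^ 2 = ∑ x, (ν x - (Fintype.card β : ℝ)⁻¹) ^ 2 :=
  Real.sq_sqrt (Finset.sum_nonneg fun _ _ => sq_nonneg _)

theorem discrepancy_nonneg {β : Type*} [Fintype β] (ν : β → ℝ) : 0 ≤ discrepancy ν :=
  Real.sqrt_nonneg _

theorem sq_discrepancy_le {β : Type*} [Fintype β] {ν : β → ℝ} (hν : ∑ x, ν x = 1) :
    discrepancy ν ^ 2 ≤ ∑ x, ν x ^ 2 := by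
  have hexpand (x : β) : (ν x - (Fintype.card β : ℝ)⁻¹) ^ 2 =
      ν x ^ 2 - 2 * (Fintype.card β : ℝ)⁻¹ * ν x + ((Fintype.card β : ℝ)⁻¹) ^ 2 := by ring
  rw [sq_discrepancy]
  simp only [hexpand, Finset.sum_add_distrib, Finset.sum_sub_distrib, ← Finset.mul_sum, hν,
    Finset.sum_const, Finset.card_univ, nsmul_eq_mul]
  rcases eq_or_ne (Fintype.card β : ℝ) 0 with h0 | h0
  · simp [h0]
  · field_simp
    nlinarith [inv_nonneg.2 (Nat.cast_nonneg (α := ℝ) (Fintype.card β))]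

theorem card_nsmul_le_sq_discrepancy {β : Type*} [Fintype β] {ν : β → ℝ} {S : Finset β}
    (hS : ∀ x ∈ S, ν x = 0) : S.card • (Fintype.card β : ℝ)⁻¹ ^ 2 ≤ discrepancy ν ^ 2 := by
  rw [sq_discrepancy]
  calc S.card • (Fintype.card β : ℝ)⁻¹ ^ 2 ≤ ∑ x ∈ S, (ν x - (Fintype.card β : ℝ)⁻¹) ^ 2 :=
        Finset.card_nsmul_le_sum _ _ _ fun x hx => by rw [hS x hx, zero_sub, neg_sq]
    _ ≤ _ := Finset.sum_le_univ_sum_of_nonneg fun x => sq_nonneg _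

theorem sum_le_card_mul_discrepancy {β : Type*} [Fintype β] (ν : β → ℝ) (S : Finset β) :
    ∑ x ∈ S, ν x ≤ S.card * ((Fintype.card β : ℝ)⁻¹ + discrepancy ν) := by
  have hpoint (x : β) : ν x - (Fintype.card β : ℝ)⁻¹ ≤ discrepancy ν :=
    Real.le_sqrt_of_sq_le
      (Finset.single_le_sum (f := fun x => (ν x - (Fintype.card β : ℝ)⁻¹) ^ 2)
        (fun _ _ => sq_nonneg _) (Finset.mem_univ x))
  rw [← nsmul_eq_mul]
  exact Finset.sum_le_card_nsmul _ _ _ fun x _ => by linarith [hpoint x]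

variable {H : Type*} [Group H] [Fintype H]

theorem discrepancy_conv_le {μ ν : H → ℝ} (hμ : ∑ x, μ x = 1) (hν : ∑ x, ν x = 1) :
    discrepancy (conv μ ν) ≤ L0norm μ * discrepancy ν := by
  have hsum : ∑ x, ((ν x - (Fintype.card H : ℝ)⁻¹ : ℝ) : ℂ) = 0 := by
    norm_cast
    simp [Finset.sum_sub_distrib, hν]
  have havg : (fun x => ((conv μ ν x - (Fintype.card H : ℝ)⁻¹ : ℝ) : ℂ)) =
      avgOp μ fun x => ((ν x - (Fintype.card H : ℝ)⁻¹ : ℝ) : ℂ) := by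
    funext x
    rw [avgOp, conv]
    norm_cast
    simp only [mul_sub, Finset.sum_sub_distrib, ← Finset.sum_mul, hμ, one_mul]
  rw [discrepancy, discrepancy, norm2V_eq_cnorm2, norm2V_eq_cnorm2, havg]
  exact cnorm2_avgOp_le μ hsum

theorem discrepancy_itconv_le [DecidableEq H] {μ : H → ℝ} (hμ : ∑ x, μ x = 1) (l : ℕ) :
    discrepancy (itconv μ l) ≤ L0norm μ ^ l := by
  induction l with
  | zero =>
    rw [pow_zero, ← sq_le_one_iff₀ (discrepancy_nonneg _)]
    exact (sq_discrepancy_le (sum_itconv hμ 0)).trans_eq (by simp [itconv, dirac])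
  | succ l ih =>
    rw [itconv_succ', pow_succ']
    exact (discrepancy_conv_le hμ (sum_itconv hμ l)).trans
      (mul_le_mul_of_nonneg_left ih (L0norm_nonneg μ))

end Discrepancy

section Gowers

open scoped Pointwise

theorem sum_unif {β : Type*} [Fintype β] [DecidableEq β] {S : Finset β} (hS : S.Nonempty) :
    ∑ x, unif S x = 1 := by
  simp [unif, hS.ne_empty]

theorem sum_sq_unif {β : Type*} [Fintype β] [DecidableEq β] (S : Finset β) :
    ∑ x, unif S x ^ 2 = (S.card : ℝ)⁻¹ := by
  rcases S.eq_empty_or_nonempty with rfl | hS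
  · simp [unif]
  · have hcard : (S.card : ℝ) ≠ 0 := by simpa using hS.ne_empty
    simp [unif, ite_pow, sq, hcard]

variable {H : Type*} [Group H] [Fintype H] [DecidableEq H] {A B C : Finset H} {D : ℕ}

theorem conv_unif_eq_zero {x : H} (hx : x ∉ A * B) : conv (unif A) (unif B) x = 0 := by
  refine Finset.sum_eq_zero fun a _ => ?_
  by_cases ha : a ∈ A
  · have hb : a⁻¹ * x ∉ B := fun hb => hx (by simpa using Finset.mul_mem_mul ha hb)
    simp [unif, hb]
  · simp [unif, ha]

theorem IsQuasirandom.mul_sq_discrepancy_conv_unif_le (hH : IsQuasirandom H D) (hA : A.Nonempty)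
    (hB : B.Nonempty) :
    D * A.card * B.card * discrepancy (conv (unif A) (unif B)) ^ 2 ≤ Fintype.card H := by
  have hA0 : (A.card : ℝ) ≠ 0 := by exact_mod_cast hA.card_ne_zero
  have hB0 : (B.card : ℝ) ≠ 0 := by exact_mod_cast hB.card_ne_zero
  have hgap : D * L0norm (unif A) ^ 2 ≤ Fintype.card H * (A.card : ℝ)⁻¹ :=
    sum_sq_unif A ▸ hH.mul_sq_L0norm_le (unif A)
  have hdisc : discrepancy (unif B) ^ 2 ≤ (B.card : ℝ)⁻¹ :=
    sum_sq_unif B ▸ sq_discrepancy_le (sum_unif hB)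
  calc D * A.card * B.card * discrepancy (conv (unif A) (unif B)) ^ 2
      ≤ D * A.card * B.card * (L0norm (unif A) * discrepancy (unif B)) ^ 2 := by
        gcongr
        · exact discrepancy_nonneg _
        · exact discrepancy_conv_le (sum_unif hA) (sum_unif hB)
    _ = A.card * B.card * (D * L0norm (unif A) ^ 2 * discrepancy (unif B) ^ 2) := by ring
    _ ≤ A.card * B.card * (Fintype.card H * (A.card : ℝ)⁻¹ * (B.card : ℝ)⁻¹) := by gcongr
    _ = Fintype.card H := by field_simp [hA0, hB0]

/-- If `x ∉ ABC`, the convolution of the uniform measures on `A` and `B` vanishes on `xC⁻¹`, which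
keeps it far from uniform. -/
theorem IsQuasirandom.mul_mul_eq_univ (hH : IsQuasirandom H D)
    (hcard : Fintype.card H ^ 3 < D * A.card * B.card * C.card) : A * B * C = Finset.univ := by
  by_contra! hne
  obtain ⟨x, hx⟩ : ∃ x, x ∉ A * B * C := by simpa [Finset.eq_univ_iff_forall] using hne
  have hpos : 0 < D * A.card * B.card * C.card := by lia
  have hA : A.Nonempty := Finset.card_pos.1 (Nat.pos_of_ne_zero fun h => by simp [h] at hpos)
  have hB : B.Nonempty := Finset.card_pos.1 (Nat.pos_of_ne_zero fun h => by simp [h] at hpos)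
  have hvanish : ∀ y ∈ C.image (x * ·⁻¹), conv (unif A) (unif B) y = 0 :=
    Finset.forall_mem_image.2 fun c hc =>
      conv_unif_eq_zero fun h => hx (by simpa using Finset.mul_mem_mul h hc)
  have hlower := card_nsmul_le_sq_discrepancy hvanish
  rw [Finset.card_image_of_injective C fun c c' h => by simpa using h, nsmul_eq_mul] at hlower
  have hn : (Fintype.card H : ℝ) ≠ 0 := by exact_mod_cast Fintype.card_ne_zero
  refine hcard.not_ge ?_
  rw [← Nat.cast_le (α := ℝ)]
  push_cast
  calc (D * A.card * B.card * C.card : ℝ)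
      = Fintype.card H ^ 2 * (D * A.card * B.card * (C.card * (Fintype.card H : ℝ)⁻¹ ^ 2)) := by
        field_simp [hn]
    _ ≤ Fintype.card H ^ 2 * Fintype.card H := by
        gcongr
        exact le_trans (by gcongr) (hH.mul_sq_discrepancy_conv_unif_le hA hB)
    _ = Fintype.card H ^ 3 := by ring

theorem mul_eq_univ_of_card_lt_card_add_card (hcard : Fintype.card H < A.card + B.card) :
    A * B = Finset.univ := by
  refine Finset.eq_univ_iff_forall.2 fun x => ?_
  have hmeet : (A ∩ B.image (x * ·⁻¹)).Nonempty :=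
    Finset.inter_nonempty_of_card_lt_card_add_card (Finset.subset_univ _) (Finset.subset_univ _) <|
      by rwa [Finset.card_image_of_injective B fun b b' h => by simpa using h]
  obtain ⟨a, ha⟩ := hmeet
  obtain ⟨haA, b, hb, rfl⟩ := by simpa using ha
  simpa using Finset.mul_mem_mul haA hb

end Gowers

section LinearPart

/-- The projection `θ` of `F_p^d ⋊ SL_d(F_p)` to the linear part, as a homomorphism. -/
def linHom (p d : ℕ) : Aff p d →* SL p d := MonoidHom.mk' Aff.lin fun _ _ => rfl

theorem lin_mul (g h : Aff p d) : (g * h).lin = g.lin * h.lin :=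
  map_mul (linHom p d) g h

theorem lin_inv (g : Aff p d) : (g⁻¹).lin = g.lin⁻¹ :=
  map_inv (linHom p d) g

open scoped Pointwise in
theorem image_lin_pow (A : Finset (Aff p d)) (n : ℕ) :
    (A ^ n).image Aff.lin = (A.image Aff.lin) ^ n :=
  Finset.image_pow (linHom p d) A n

variable [NeZero p]

theorem sum_push_mul (μ : Aff p d → ℝ) (F : SL p d → ℝ) :
    ∑ σ, push μ σ * F σ = ∑ g, μ g * F g.lin := by
  simp only [push, Finset.sum_mul, ite_mul, zero_mul]
  rw [Finset.sum_comm]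
  simp

theorem sum_push (μ : Aff p d → ℝ) : ∑ σ, push μ σ = ∑ g, μ g := by
  simpa using sum_push_mul μ 1

theorem push_conv (μ ν : Aff p d → ℝ) : push (conv μ ν) = conv (push μ) (push ν) := by
  funext σ
  have hinner (h : Aff p d) :
      ∑ g, (if g.lin = σ then μ h * ν (h⁻¹ * g) else 0) = μ h * push ν (h.lin⁻¹ * σ) := by
    rw [push, Finset.mul_sum]
    exact Fintype.sum_equiv (Equiv.mulLeft h⁻¹) _ _ fun g => by simp [lin_mul, lin_inv]
  calc push (conv μ ν) σ = ∑ g, ∑ h, (if g.lin = σ then μ h * ν (h⁻¹ * g) else 0) :=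
        Finset.sum_congr rfl fun g _ => by split <;> simp [conv]
    _ = ∑ h, μ h * push ν (h.lin⁻¹ * σ) := by
        rw [Finset.sum_comm]
        exact Finset.sum_congr rfl fun h _ => hinner h
    _ = conv (push μ) (push ν) σ := (sum_push_mul μ fun τ => push ν (τ⁻¹ * σ)).symm

theorem push_dirac (g : Aff p d) : push (dirac g) = dirac g.lin := by
  funext σ
  rw [push, Finset.sum_eq_single_of_mem g (Finset.mem_univ g) fun h _ hg => by simp [dirac, hg]]
  simp [dirac, eq_comm]

theorem push_itconv (μ : Aff p d → ℝ) (l : ℕ) : push (itconv μ l) = itconv (push μ) l := by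
  induction l with
  | zero => exact push_dirac 1
  | succ l ih => rw [itconv, itconv, push_conv, ih]

theorem sum_le_sum_push {μ : Aff p d → ℝ} (hμ : ∀ g, 0 ≤ μ g) (A : Finset (Aff p d)) :
    ∑ g ∈ A, μ g ≤ ∑ σ ∈ A.image Aff.lin, push μ σ := by
  let indicator (σ : SL p d) : ℝ := if σ ∈ A.image Aff.lin then 1 else 0
  calc ∑ g ∈ A, μ g = ∑ g ∈ A, μ g * indicator g.lin :=
        Finset.sum_congr rfl fun g hg => by
          simp only [indicator, Finset.mem_image_of_mem _ hg, if_true, mul_one]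
    _ ≤ ∑ g, μ g * indicator g.lin := Finset.sum_le_univ_sum_of_nonneg fun g =>
        mul_nonneg (hμ g) (ite_nonneg zero_le_one le_rfl)
    _ = ∑ σ ∈ A.image Aff.lin, push μ σ := by
        rw [← sum_push_mul]
        simp only [indicator, mul_ite, mul_one, mul_zero, Finset.sum_ite_mem, Finset.univ_inter]

theorem sum_itconv_le {μ : Aff p d → ℝ} (hμ : IsProb μ) (A : Finset (Aff p d)) (l : ℕ) :
    ∑ g ∈ A, itconv μ l g ≤
      (A.image Aff.lin).card * ((Fintype.card (SL p d) : ℝ)⁻¹ + L0theta μ ^ l) := by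
  have hpush : ∑ σ, push μ σ = 1 := (sum_push μ).trans hμ.2
  calc ∑ g ∈ A, itconv μ l g ≤ ∑ σ ∈ A.image Aff.lin, itconv (push μ) l σ :=
        push_itconv μ l ▸ sum_le_sum_push (itconv_nonneg hμ.1 l) A
    _ ≤ (A.image Aff.lin).card *
          ((Fintype.card (SL p d) : ℝ)⁻¹ + discrepancy (itconv (push μ) l)) :=
        sum_le_card_mul_discrepancy _ _
    _ ≤ _ := by
        gcongr
        exact discrepancy_itconv_le hpush l

end LinearPart

section Numerics

theorem card_specialLinearGroup_le [NeZero p] : Fintype.card (SL p d) ≤ p ^ d ^ 2 := by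
  calc Fintype.card (SL p d) ≤ Fintype.card (Fin d → Fin d → ZMod p) :=
        Fintype.card_le_of_injective (fun g => g.1) Subtype.val_injective
    _ = p ^ d ^ 2 := by
      rw [Fintype.card_fun, Fintype.card_fun, Fintype.card_fin, ZMod.card, ← pow_mul, sq]

theorem card_aff_le [NeZero p] : Fintype.card (Aff p d) ≤ p ^ (2 * d ^ 2) := by
  calc Fintype.card (Aff p d) = Fintype.card (V p d) * Fintype.card (SL p d) :=
        Fintype.card_prod _ _
    _ = p ^ d * Fintype.card (SL p d) := by rw [Fintype.card_fun, Fintype.card_fin, ZMod.card]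
    _ ≤ p ^ d ^ 2 * p ^ d ^ 2 := by
        gcongr
        · exact NeZero.pos p
        · exact Nat.le_self_pow two_ne_zero d
        · exact card_specialLinearGroup_le
    _ = p ^ (2 * d ^ 2) := by rw [two_mul, pow_add]

theorem one_le_card_aff_rpow_pow_mul [NeZero p] (hd : 0 < d) :
    1 ≤ ((Fintype.card (Aff p d) : ℝ) ^ (-(1 / (16 * (d : ℝ) ^ 2)))) ^ 8 * p := by
  have hp : (0 : ℝ) < p := by exact_mod_cast NeZero.pos p
  have hG : (0 : ℝ) < Fintype.card (Aff p d) := by exact_mod_cast Fintype.card_pos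
  have hle : (Fintype.card (Aff p d) : ℝ) ≤ (p : ℝ) ^ (2 * d ^ 2 : ℕ) := by
    exact_mod_cast card_aff_le
  have hneg : -(1 / (2 * (d : ℝ) ^ 2)) ≤ 0 := neg_nonpos.2 (by positivity)
  calc (1 : ℝ) = ((p : ℝ) ^ (2 * d ^ 2 : ℕ)) ^ (-(1 / (2 * (d : ℝ) ^ 2))) * p := by
        rw [← Real.rpow_natCast_mul hp.le, Nat.cast_mul, Nat.cast_pow, Nat.cast_ofNat, mul_neg,
          mul_one_div_cancel (by positivity), Real.rpow_neg_one, inv_mul_cancel₀ hp.ne']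
    _ ≤ (Fintype.card (Aff p d) : ℝ) ^ (-(1 / (2 * (d : ℝ) ^ 2))) * p :=
        mul_le_mul_of_nonneg_right (Real.rpow_le_rpow_of_nonpos hG hle hneg) hp.le
    _ = _ := by
        rw [← Real.rpow_mul_natCast hG.le]
        congr 2
        push_cast
        field_simp
        norm_num

theorem half_pow_mul_le_quarter {x : ℝ} (hx : 2 ≤ x) {l : ℕ} (hl : ⌊8 * Real.log x⌋₊ ≤ l) :
    (1 / 2) ^ l * x ≤ 1 / 4 := by
  have hlog2 : 0.6931471803 < Real.log 2 := Real.log_two_gt_d9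
  have hlog : Real.log 2 ≤ Real.log x := Real.log_le_log two_pos hx
  have hl1 : 8 * Real.log x < l + 1 :=
    (Nat.lt_floor_add_one _).trans_le (by exact_mod_cast Nat.succ_le_succ hl)
  have hpow : x * 2 ^ 2 ≤ 2 ^ l := by
    rw [← Real.log_le_log_iff (by positivity) (by positivity),
      Real.log_mul (by positivity) (by positivity), Real.log_pow, Real.log_pow]
    push_cast
    nlinarith
  rw [one_div, inv_pow, inv_mul_le_iff₀ (by positivity)]
  linarith

theorem lt_two_mul_or_cube_lt {p : ℕ} {r s b : ℝ} (hr : 0 < r) (hs : 0 < s) (hrp : 1 ≤ r ^ 8 * p)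
    (hb : 4 / 5 * r * s ≤ b) : s < 2 * b ∨ s ^ 3 < ((p - 1) / 2 : ℕ) * b ^ 3 := by
  rcases lt_or_ge (5 / 8) r with hr1 | hr1
  · left
    nlinarith
  right
  have hp : (42 : ℝ) < p := by
    have : 1 ≤ (5 / 8) ^ 8 * (p : ℝ) := hrp.trans (by gcongr)
    linarith
  have hD : (p : ℝ) ≤ 3 * ((p - 1) / 2 : ℕ) := by
    have : 42 < p := by exact_mod_cast hp
    exact_mod_cast (by lia : p ≤ 3 * ((p - 1) / 2))
  have hrp' : 10 ≤ r ^ 3 * p := by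
    have : 1 ≤ (5 / 8) ^ 5 * (r ^ 3 * p) :=
      calc 1 ≤ r ^ 5 * (r ^ 3 * p) := by linarith [hrp]
        _ ≤ (5 / 8) ^ 5 * (r ^ 3 * p) := by gcongr
    linarith
  calc s ^ 3 < 10 / 3 * (4 / 5) ^ 3 * s ^ 3 := lt_mul_of_one_lt_left (by positivity) (by norm_num)
    _ ≤ r ^ 3 * p / 3 * (4 / 5) ^ 3 * s ^ 3 := by gcongr
    _ = p / 3 * (4 / 5 * r * s) ^ 3 := by ring
    _ ≤ ((p - 1) / 2 : ℕ) * b ^ 3 := by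
        gcongr
        linarith

end Numerics

theorem sum_itconv_mul_card_le [Fact p.Prime] (hd : 0 < d) {μ : Aff p d → ℝ} (hμ : IsProb μ)
    (hgap : L0theta μ ≤ 1 / 2) (A : Finset (Aff p d)) {l : ℕ}
    (hl : ⌊8 * (d : ℝ) ^ 2 * Real.log p⌋₊ ≤ l) :
    4 / 5 * (∑ g ∈ A, itconv μ l g) * Fintype.card (SL p d) ≤ (A.image Aff.lin).card := by
  have hp : (2 : ℝ) ≤ p := by exact_mod_cast (Fact.out : p.Prime).two_le
  have hle : (Fintype.card (SL p d) : ℝ) ≤ (p : ℝ) ^ d ^ 2 := by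
    exact_mod_cast card_specialLinearGroup_le
  have hs : (0 : ℝ) < Fintype.card (SL p d) := by exact_mod_cast Fintype.card_pos
  set s := (Fintype.card (SL p d) : ℝ)
  have herror : (1 / 2) ^ l * s ≤ 1 / 4 := by
    refine (mul_le_mul_of_nonneg_left hle (by positivity)).trans (half_pow_mul_le_quarter ?_ ?_)
    · exact hp.trans (le_self_pow₀ (by linarith) (by positivity))
    · rwa [Real.log_pow, Nat.cast_pow, ← mul_assoc]
  have hsum : ∑ g ∈ A, itconv μ l g ≤ (A.image Aff.lin).card * (s⁻¹ + (1 / 2) ^ l) :=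
    (sum_itconv_le hμ A l).trans (by gcongr; exact L0norm_nonneg _)
  calc 4 / 5 * (∑ g ∈ A, itconv μ l g) * s
      ≤ 4 / 5 * ((A.image Aff.lin).card * (s⁻¹ + (1 / 2) ^ l)) * s := by gcongr
    _ = 4 / 5 * (A.image Aff.lin).card * (1 + (1 / 2) ^ l * s) := by field_simp
    _ ≤ 4 / 5 * (A.image Aff.lin).card * (1 + 1 / 4) := by gcongr
    _ = (A.image Aff.lin).card := by ring

open Pointwise in
theorem statement10_general {p d : ℕ} [Fact p.Prime] (hd : 0 < d) {μ : Aff p d → ℝ}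
    (hμ : IsProb μ) (hgap : L0theta μ ≤ 1 / 2) {A : Finset (Aff p d)} {l : ℕ}
    (hl : ⌊8 * (d : ℝ) ^ 2 * Real.log p⌋₊ ≤ l)
    (hA : (Fintype.card (Aff p d) : ℝ) ^ (-(1 / (16 * (d : ℝ) ^ 2))) ≤ ∑ g ∈ A, itconv μ l g) :
    Finset.image Aff.lin (A ^ 3) = (Finset.univ : Finset (SL p d)) := by
  rw [image_lin_pow, pow_succ, sq]
  set B := A.image Aff.lin
  have hG : (0 : ℝ) < Fintype.card (Aff p d) := by exact_mod_cast Fintype.card_pos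
  have hS : (0 : ℝ) < Fintype.card (SL p d) := by exact_mod_cast Fintype.card_pos
  have hdense : 4 / 5 * (Fintype.card (Aff p d) : ℝ) ^ (-(1 / (16 * (d : ℝ) ^ 2))) *
      Fintype.card (SL p d) ≤ B.card :=
    le_trans (by gcongr) (sum_itconv_mul_card_le hd hμ hgap A hl)
  rcases lt_two_mul_or_cube_lt (Real.rpow_pos_of_pos hG _) hS (one_le_card_aff_rpow_pow_mul hd)
    hdense with hhalf | hcube
  · have hcard : Fintype.card (SL p d) < 2 * B.card := by exact_mod_cast hhalf
    have hB : B.Nonempty := Finset.card_pos.1 (by lia)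
    refine mul_eq_univ_of_card_lt_card_add_card (hcard.trans_le ?_)
    rw [two_mul]
    exact Nat.add_le_add_right (Finset.card_le_card_mul_right hB) _
  · refine (isQuasirandom_specialLinearGroup (Fin d) p).mul_mul_eq_univ ?_
    rw [mul_assoc, mul_assoc, ← sq, ← pow_succ']
    exact_mod_cast hcube

open Pointwise in
/-- (Lemma `linearpart`.) There is `ε > 0` depending only on `d` such that
for every prime `p`, every symmetric probability measure `μ` on `G = F_p^d ⋊ SL_d(F_p)` with
`‖L₀^θ(μ)‖ ≤ 1/2`, and every symmetric `A ⊆ G` with `μ^{*(l)}(A) ≥ |G|^{−ε}` for some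
`l ≥ ⌊2^47 d² log p⌋`, one has `θ(Π₃A) = SL_d(F_p)`. -/
theorem statement10 (d : ℕ) (hd : 0 < d) :
    ∃ ε : ℝ, 0 < ε ∧ ∀ (p : ℕ) [Fact p.Prime],
      ∀ μ : Aff p d → ℝ, IsProb μ → (∀ g : Aff p d, μ g⁻¹ = μ g) →
        L0theta μ ≤ 1 / 2 →
        ∀ A : Finset (Aff p d), (∀ a ∈ A, a⁻¹ ∈ A) →
          (∃ l : ℕ, ⌊(2 : ℝ) ^ 47 * (d : ℝ) ^ 2 * Real.log p⌋₊ ≤ l ∧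
            (Fintype.card (Aff p d) : ℝ) ^ (-ε) ≤ ∑ g ∈ A, itconv μ l g) →
          Finset.image Aff.lin (A ^ 3) = (Finset.univ : Finset (SL p d)) := by
  refine ⟨1 / (16 * (d : ℝ) ^ 2), by positivity, fun p _ μ hμ _ hgap A _ ⟨l, hl, hA⟩ =>
    statement10_general hd hμ hgap (le_trans ?_ hl) hA⟩
  gcongr
  norm_num

end Paper
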